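/- Let N ≥ 1 and f : (ℝ²)^N → (ℝ²)^N be continuously differentiable. Assume there exists Z* ∈ (ℝ²)^N with f(Z*) = 0 and that the Jacobian Df(Z*) has an eigenvalue with positive real part λ₀ > 0. Then for every λ ∈ (0, λ₀), every β ∈ (0,1) and every sufficiently small ε > 0, there exist Z₀ ∈ (ℝ²)^N with |Z₀ − Z*|_∞ = ε/2 and a solution Z of dZ/dt = f(Z(t)), Z(0) = Z₀, such that τ_Z ≤ ((1−β)/λ) |ln ε|, where τ_Z = sup{ t ≥ 0 : for all s ∈ [0,t], |Z(s) − Z*|_∞ ≤ 2ε^β }. -/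

import Mathlib

/-- The `2N × 2N` real matrix of the total derivative of `f : (ℝ²)^N → (ℝ²)^N`
(with `ℝ²` identified with `ℂ`) at the point `Z`, in the real basis `(1, i)` of each factor. -/
noncomputable def jacobianMatrix (N : ℕ) (f : (Fin N → ℂ) → (Fin N → ℂ))
    (Z : Fin N → ℂ) : Matrix (Σ _ : Fin N, Fin 2) (Σ _ : Fin N, Fin 2) ℝ :=
  LinearMap.toMatrix (Pi.basis fun _ : Fin N => Complex.basisOneI)
    (Pi.basis fun _ : Fin N => Complex.basisOneI)
    (fderiv ℝ f Z : (Fin N → ℂ) →ₗ[ℝ] (Fin N → ℂ))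

/-- `μ` is a (possibly complex) eigenvalue of the Jacobian of `f` at `Z`, i.e. a root of
the characteristic polynomial of the `2N × 2N` real matrix representing `Df(Z)`. -/
def IsJacobianEigenvalue (N : ℕ) (f : (Fin N → ℂ) → (Fin N → ℂ))
    (Z : Fin N → ℂ) (μ : ℂ) : Prop :=
  (((jacobianMatrix N f Z).charpoly).map (algebraMap ℝ ℂ)).IsRoot μ

/-!
For `A = Df(Z*)` and a positive definite `G`, the Lyapunov equation
`B(Az, w) + B(z, Aw) - 2sB(z, w) = G(z, w)` has a solution `B` for some `s ∈ (λ, λ₀)`, because only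
finitely many `2s` are eigenvalues of the Lyapunov operator. The unstable eigenvector forces
`B(v, v) > 0` for some `v`. Near `Z*` the nonlinear remainder is absorbed by `G`, so along the
solution started at distance `ε/2` from `Z*` in the direction `v` the quantity `B(Z - Z*, Z - Z*)`
is at least of order `ε² exp(2st)`. Since it is at most `‖B‖ ‖Z - Z*‖²` and `s > λ`, the solution
must leave the ball of radius `2ε^β` by time `((1 - β)/λ)|ln ε|`.
-/

open Set Filter Topology Metric

section Eigenvector

lemma exists_mulVec_eq_smul_of_isRoot_charpoly {ι K : Type*} [Fintype ι] [DecidableEq ι]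
    [Field K] {M : Matrix ι ι K} {μ : K} (hμ : M.charpoly.IsRoot μ) :
    ∃ v ≠ 0, M.mulVec v = μ • v := by
  rw [← Matrix.charpoly_toLin', ← Module.End.hasEigenvalue_iff_isRoot_charpoly] at hμ
  obtain ⟨v, hv⟩ := hμ.exists_hasEigenvector
  exact ⟨v, hv.2, hv.apply_eq_smul⟩

/-- `x` and `y` are the real and imaginary parts of an eigenvector `x + iy` for the eigenvalue `μ`
of the complexification of `A`. -/
structure IsReImEigenvector {E : Type*} [AddCommGroup E] [Module ℝ E]
    (A : E →ₗ[ℝ] E) (μ : ℂ) (x y : E) : Prop where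
  ne_zero : x ≠ 0 ∨ y ≠ 0
  apply_re : A x = μ.re • x - μ.im • y
  apply_im : A y = μ.im • x + μ.re • y

lemma exists_isReImEigenvector_toLin' {ι : Type*} [Fintype ι] [DecidableEq ι]
    {M : Matrix ι ι ℝ} {μ : ℂ} (hμ : (M.charpoly.map (algebraMap ℝ ℂ)).IsRoot μ) :
    ∃ x y, IsReImEigenvector M.toLin' μ x y := by
  rw [← Matrix.charpoly_map] at hμ
  obtain ⟨v, hv0, hv⟩ := exists_mulVec_eq_smul_of_isRoot_charpoly hμ
  have hsum (i : ι) : ∑ j, (M i j : ℂ) * v j = μ * v i := congrFun hv i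
  refine ⟨fun i ↦ (v i).re, fun i ↦ (v i).im, ?_, ?_, ?_⟩
  · by_contra! h
    exact hv0 (funext fun i ↦ Complex.ext (congrFun h.1 i) (congrFun h.2 i))
  · ext i
    simpa [Matrix.mulVec, dotProduct] using congrArg Complex.re (hsum i)
  · ext i
    simpa [Matrix.mulVec, dotProduct, add_comm] using congrArg Complex.im (hsum i)

lemma exists_isReImEigenvector {E : Type*} [AddCommGroup E] [Module ℝ E] [FiniteDimensional ℝ E]
    {A : E →ₗ[ℝ] E} {μ : ℂ} (hμ : (A.charpoly.map (algebraMap ℝ ℂ)).IsRoot μ) :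
    ∃ x y, IsReImEigenvector A μ x y := by
  let b := Module.finBasis ℝ E
  rw [← LinearMap.charpoly_toMatrix A b] at hμ
  obtain ⟨x, y, hxy⟩ := exists_isReImEigenvector_toLin' hμ
  have hA (w : Fin (Module.finrank ℝ E) → ℝ) :
      A (b.equivFun.symm w) = b.equivFun.symm ((LinearMap.toMatrix b b A).toLin' w) := by
    apply b.equivFun.injective
    have h := LinearMap.toMatrix_mulVec_repr b b A (b.equivFun.symm w)
    rwa [← b.equivFun_apply, ← b.equivFun_apply, LinearEquiv.apply_symm_apply, eq_comm,
      ← Matrix.toLin'_apply, ← b.equivFun.apply_symm_apply (Matrix.toLin' _ w)] at h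
  refine ⟨b.equivFun.symm x, b.equivFun.symm y, ?_, ?_, ?_⟩
  · simpa only [ne_eq, LinearEquiv.map_eq_zero_iff] using hxy.ne_zero
  · rw [hA, hxy.apply_re, map_sub, map_smul, map_smul]
  · rw [hA, hxy.apply_im, map_add, map_smul, map_smul]

end Eigenvector

section Lyapunov

variable {E : Type*} [NormedAddCommGroup E] [NormedSpace ℝ E]

/-- The Lyapunov operator `B ↦ B(A·, ·) + B(·, A·)` on bilinear forms: the derivative of `B` along
the linear flow of `A`. -/
noncomputable def lyapunovOperator (A : E →L[ℝ] E) : Module.End ℝ (E →L[ℝ] E →L[ℝ] ℝ) where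
  toFun B := B.bilinearComp A (.id ℝ E) + B.bilinearComp (.id ℝ E) A
  map_add' B C := by ext z w; simp [add_add_add_comm]
  map_smul' c B := by ext z w; simp

lemma lyapunovOperator_apply (A : E →L[ℝ] E) (B : E →L[ℝ] E →L[ℝ] ℝ) (z w : E) :
    lyapunovOperator A B z w = B (A z) w + B z (A w) := rfl

/-- `B` is a strict Lyapunov form for `A` at rate `s`: along solutions of `z' = A z`, the derivative
of `B(z, z)` exceeds `2s B(z, z)` by at least `‖z‖²`. No sign of `B` is assumed. -/
def IsLyapunovForm (A : E →L[ℝ] E) (s : ℝ) (B : E →L[ℝ] E →L[ℝ] ℝ) : Prop :=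
  ∀ z, ‖z‖ ^ 2 + 2 * s * B z z ≤ B (A z) z + B z (A z)

lemma exists_mem_Ioo_forall_exists_sub_smul_eq {V : Type*} [AddCommGroup V] [Module ℝ V]
    [FiniteDimensional ℝ V] (L : Module.End ℝ V) {a b : ℝ} (hab : a < b) :
    ∃ c ∈ Ioo a b, ∀ v, ∃ u, L u - c • u = v := by
  obtain ⟨c, hc, hspec⟩ := ((Ioo_infinite hab).sdiff (Module.End.finite_spectrum L)).nonempty
  have hunit : IsUnit (algebraMap ℝ (Module.End ℝ V) c - L) := not_not.1 hspec
  refine ⟨c, hc, fun v ↦ ?_⟩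
  obtain ⟨u, hu : c • u - L u = -v⟩ := ((Module.End.isUnit_iff _).1 hunit).2 (-v)
  exact ⟨u, by rw [← neg_sub, hu, neg_neg]⟩

variable (E) in
lemma exists_bilinearForm_sq_norm_le [FiniteDimensional ℝ E] :
    ∃ G : E →L[ℝ] E →L[ℝ] ℝ, ∀ z, ‖z‖ ^ 2 ≤ G z z := by
  let e := toEuclidean (E := E)
  let c := ‖e.symm.toContinuousLinearMap‖
  refine ⟨c ^ 2 • (innerSL ℝ).bilinearComp e.toContinuousLinearMap e.toContinuousLinearMap,
    fun z ↦ ?_⟩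
  calc ‖z‖ ^ 2 ≤ (c * ‖e z‖) ^ 2 := by
        gcongr
        simpa using e.symm.toContinuousLinearMap.le_opNorm (e z)
    _ = _ := by simp [mul_pow]

lemma exists_isLyapunovForm [FiniteDimensional ℝ E] (A : E →L[ℝ] E) {a b : ℝ} (hab : a < b) :
    ∃ s ∈ Ioo a b, ∃ B, IsLyapunovForm A s B := by
  obtain ⟨c, ⟨hac, hcb⟩, hsurj⟩ := exists_mem_Ioo_forall_exists_sub_smul_eq
    (V := E →L[ℝ] E →L[ℝ] ℝ) (lyapunovOperator A) (mul_lt_mul_of_pos_left hab two_pos)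
  obtain ⟨G, hG⟩ := exists_bilinearForm_sq_norm_le E
  obtain ⟨B, hB⟩ := hsurj G
  refine ⟨c / 2, ⟨by linarith, by linarith⟩, B, fun z ↦ le_sub_iff_add_le.1 ?_⟩
  calc ‖z‖ ^ 2 ≤ G z z := hG z
    _ = lyapunovOperator A B z z - c * B z z := by rw [← hB]; rfl
    _ = B (A z) z + B z (A z) - 2 * (c / 2) * B z z := by
        rw [lyapunovOperator_apply, mul_div_cancel₀ c two_ne_zero]

namespace IsLyapunovForm

variable {A : E →L[ℝ] E} {s : ℝ} {B : E →L[ℝ] E →L[ℝ] ℝ}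

lemma exists_pos (hB : IsLyapunovForm A s B) {μ : ℂ} (hs : s < μ.re) {x y : E}
    (hxy : IsReImEigenvector (A : E →ₗ[ℝ] E) μ x y) : ∃ z, 0 < B z z := by
  -- The cross terms `μ.im * (B x y + B y x)` cancel in the sum over `x` and `y`.
  have hsum : ‖x‖ ^ 2 + ‖y‖ ^ 2 ≤ 2 * (μ.re - s) * (B x x + B y y) := by
    have hAx : A x = μ.re • x - μ.im • y := hxy.apply_re
    have hAy : A y = μ.im • x + μ.re • y := hxy.apply_im
    have hx := hB x
    have hy := hB y
    simp only [hAx, hAy, map_sub, map_add, map_smul, sub_apply, add_apply, smul_apply,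
      smul_eq_mul] at hx hy
    linarith
  have hpos : 0 < ‖x‖ ^ 2 + ‖y‖ ^ 2 := by
    rcases hxy.ne_zero with h | h <;> positivity
  have hB : 0 < B x x + B y y :=
    pos_of_mul_pos_right (hpos.trans_le hsum) (by linarith)
  by_contra! h
  linarith [h x, h y]

lemma two_mul_le_of_norm_sub_le (hB : IsLyapunovForm A s B) {η : ℝ} (hη : 2 * ‖B‖ * η ≤ 1)
    {z w : E} (hw : ‖w - A z‖ ≤ η * ‖z‖) : 2 * s * B z z ≤ B w z + B z w := by
  set d := w - A z
  have hleft : |B d z| ≤ ‖B‖ * (η * ‖z‖) * ‖z‖ := (B.le_opNorm₂ d z).trans (by gcongr)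
  have hright : |B z d| ≤ ‖B‖ * ‖z‖ * (η * ‖z‖) := (B.le_opNorm₂ z d).trans (by gcongr)
  have habsorb : 2 * ‖B‖ * η * ‖z‖ ^ 2 ≤ 1 * ‖z‖ ^ 2 := by gcongr
  have hw : w = A z + d := (add_sub_cancel (A z) w).symm
  simp only [hw, map_add, add_apply]
  linarith [hB z, (abs_le.1 hleft).1, (abs_le.1 hright).1]

end IsLyapunovForm

end Lyapunov

section DifferentialEquations

lemma mul_exp_le_of_mul_le_deriv {φ φ' : ℝ → ℝ} {a b c : ℝ} (hab : a ≤ b)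
    (hφ : ∀ t ∈ Icc a b, HasDerivAt φ (φ' t) t) (hc : ∀ t ∈ Icc a b, c * φ t ≤ φ' t) :
    φ a * Real.exp (c * (b - a)) ≤ φ b := by
  have h := le_gronwallBound_of_liminf_deriv_right_le (f := -φ) (f' := -φ') (K := c) (ε := 0)
    (fun t ht ↦ (hφ t ht).neg.continuousAt.continuousWithinAt)
    (fun t ht _ hr ↦
      (hφ t (Ico_subset_Icc_self ht)).neg.hasDerivWithinAt.liminf_right_slope_le hr)
    le_rfl
    (fun t ht ↦ by simpa using hc t (Ico_subset_Icc_self ht))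
    b (right_mem_Icc.2 hab)
  simpa [gronwallBound_ε0] using h

variable {E : Type*} [NormedAddCommGroup E] [NormedSpace ℝ E]

namespace IsLyapunovForm

variable {A : E →L[ℝ] E} {B : E →L[ℝ] E →L[ℝ] ℝ} {u u' : ℝ → E} {s η a b : ℝ}

lemma mul_exp_le (hB : IsLyapunovForm A s B) (hη : 2 * ‖B‖ * η ≤ 1) (hab : a ≤ b)
    (hu : ∀ t ∈ Icc a b, HasDerivAt u (u' t) t)
    (hu' : ∀ t ∈ Icc a b, ‖u' t - A (u t)‖ ≤ η * ‖u t‖) :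
    B (u a) (u a) * Real.exp (2 * s * (b - a)) ≤ B (u b) (u b) :=
  mul_exp_le_of_mul_le_deriv (φ := fun t ↦ B (u t) (u t)) hab
    (fun t ht ↦ (B.hasFDerivAt.comp_hasDerivAt t (hu t ht)).clm_apply (hu t ht))
    (fun t ht ↦ hB.two_mul_le_of_norm_sub_le hη (hu' t ht))

lemma exists_le_norm (hB : IsLyapunovForm A s B) (hη : 2 * ‖B‖ * η ≤ 1) (hab : a ≤ b) {ρ : ℝ}
    (hu : ∀ t ∈ Icc a b, ‖u t‖ ≤ ρ → HasDerivAt u (u' t) t)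
    (hu' : ∀ t ∈ Icc a b, ‖u t‖ ≤ ρ → ‖u' t - A (u t)‖ ≤ η * ‖u t‖)
    (hlarge : ‖B‖ * ρ ^ 2 < B (u a) (u a) * Real.exp (2 * s * (b - a))) :
    ∃ t ∈ Icc a b, ρ ≤ ‖u t‖ := by
  by_contra! hstay
  refine hlarge.not_ge ?_
  calc B (u a) (u a) * Real.exp (2 * s * (b - a)) ≤ B (u b) (u b) :=
        hB.mul_exp_le hη hab (fun t ht ↦ hu t ht (hstay t ht).le)
          (fun t ht ↦ hu' t ht (hstay t ht).le)
    _ ≤ ‖B‖ * ‖u b‖ * ‖u b‖ := (le_abs_self _).trans (B.le_opNorm₂ _ _)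
    _ = ‖B‖ * ‖u b‖ ^ 2 := by ring
    _ ≤ ‖B‖ * ρ ^ 2 := by
        gcongr
        exact (hstay b (right_mem_Icc.2 hab)).le

end IsLyapunovForm

lemma exists_forall_hasDerivAt_of_lipschitzWith_of_bounded [CompleteSpace E] {g : E → E}
    {K M : NNReal} (hK : LipschitzWith K g) (hM : ∀ x, ‖g x‖ ≤ M) (z : E) {T : ℝ} (hT : 0 ≤ T) :
    ∃ W : ℝ → E, W 0 = z ∧ ∀ t ∈ Icc 0 T, HasDerivAt W (g (W t)) t := by
  have hmem : (0 : ℝ) ∈ Icc (-1) (T + 1) := ⟨by norm_num, by linarith⟩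
  have hpicard : IsPicardLindelof (fun _ ↦ g) (⟨0, hmem⟩ : Icc (-1) (T + 1)) z
      (M * (T + 1).toNNReal) 0 M K := by
    refine .of_time_independent (fun x _ ↦ hM x) hK.lipschitzOnWith ?_
    have hmax : max (T + 1) 1 = T + 1 := max_eq_left (by linarith)
    rw [NNReal.coe_mul, Real.coe_toNNReal _ (by linarith)]
    simp [hmax]
  obtain ⟨W, hW0, hW⟩ := hpicard.exists_eq_forall_mem_Icc_hasDerivWithinAt₀
  refine ⟨W, hW0, fun t ⟨ht0, htT⟩ ↦ ?_⟩
  exact (hW t ⟨by linarith, by linarith⟩).hasDerivAt (Icc_mem_nhds (by linarith) (by linarith))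

lemma contDiff_bump_smul [HasContDiffBump E] {F : Type*} [NormedAddCommGroup F]
    [NormedSpace ℝ F] {f : E → F} {p : E} {n : ℕ∞} (χ : ContDiffBump p)
    (hf : ∀ x ∈ closedBall p χ.rOut, ContDiffAt ℝ n f x) : ContDiff ℝ n fun x ↦ χ x • f x := by
  refine contDiff_iff_contDiffAt.2 fun x ↦ ?_
  by_cases hx : x ∈ tsupport χ
  · exact χ.contDiffAt.smul (hf x (χ.tsupport_eq ▸ hx))
  · have hzero : (fun x ↦ χ x • f x) =ᶠ[𝓝 x] fun _ ↦ 0 := by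
      filter_upwards [notMem_tsupport_iff_eventuallyEq.1 hx] with y hy
      simp [hy]
    exact contDiffAt_const.congr_of_eventuallyEq hzero

lemma exists_lipschitzWith_bounded_eqOn_closedBall [FiniteDimensional ℝ E] {F : Type*}
    [NormedAddCommGroup F] [NormedSpace ℝ F] {f : E → F} {p : E} (hf : ContDiffAt ℝ 1 f p) :
    ∃ r > 0, ∃ (g : E → F) (K M : NNReal),
      LipschitzWith K g ∧ (∀ x, ‖g x‖ ≤ M) ∧ EqOn g f (closedBall p r) := by
  obtain ⟨R, hR, hfR⟩ := nhds_basis_closedBall.eventually_iff.1 (hf.eventually (by simp))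
  let χ : ContDiffBump p := ⟨R / 2, R, half_pos hR, half_lt_self hR⟩
  have hg : ContDiff ℝ 1 fun x ↦ χ x • f x := contDiff_bump_smul χ fun x hx ↦ hfR hx
  have hsupp : HasCompactSupport fun x ↦ χ x • f x := χ.hasCompactSupport.smul_right
  obtain ⟨K, hK⟩ := hg.lipschitzWith_of_hasCompactSupport hsupp one_ne_zero
  obtain ⟨M, hM⟩ := hg.continuous.bounded_above_of_compact_support hsupp
  refine ⟨R / 2, half_pos hR, _, K, M.toNNReal, hK,
    fun x ↦ (hM x).trans (Real.le_coe_toNNReal M), fun x hx ↦ ?_⟩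
  simp [χ.one_of_mem_closedBall hx]

end DifferentialEquations

section Exit

lemma exists_first_hitting_time {α δ : Type*} [ConditionallyCompleteLinearOrder α]
    [DenselyOrdered α] [TopologicalSpace α] [OrderTopology α] [LinearOrder δ] [TopologicalSpace δ]
    [OrderClosedTopology δ] {φ : α → δ} {a b : α} {c : δ} (hφ : ContinuousOn φ (Icc a b))
    (ha : φ a ≤ c) (hc : ∃ t ∈ Icc a b, c ≤ φ t) :
    ∃ τ ∈ Icc a b, φ τ = c ∧ ∀ t ∈ Icc a τ, φ t ≤ c := by
  have hcompact : IsCompact (Icc a b ∩ φ ⁻¹' Ici c) :=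
    isCompact_Icc.of_isClosed_subset (hφ.preimage_isClosed_of_isClosed isClosed_Icc isClosed_Ici)
      inter_subset_left
  obtain ⟨τ, ⟨hτ, hcτ⟩, hleast⟩ := hcompact.exists_isLeast hc
  have hlast : ∀ t ∈ Icc a τ, c ≤ φ t → t = τ := fun t ht hct ↦
    ht.2.antisymm (hleast ⟨Icc_subset_Icc_right hτ.2 ht, hct⟩)
  obtain ⟨σ, hσ, hφσ⟩ :=
    intermediate_value_Icc hτ.1 (hφ.mono (Icc_subset_Icc_right hτ.2)) ⟨ha, hcτ⟩
  have hφτ : φ τ = c := hlast σ hσ hφσ.ge ▸ hφσ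
  refine ⟨τ, hτ, hφτ, fun t ht ↦ ?_⟩
  by_contra! h
  exact h.ne' (hlast t ht h.le ▸ hφτ)

variable {E : Type*} [NormedAddCommGroup E] [NormedSpace ℝ E]

lemma exists_norm_sub_fderiv_le {f : E → E} {p : E} (hf : DifferentiableAt ℝ f p) (hp : f p = 0)
    {η : ℝ} (hη : 0 < η) :
    ∃ r > 0, ∀ w ∈ closedBall p r, ‖f w - fderiv ℝ f p (w - p)‖ ≤ η * ‖w - p‖ := by
  simpa [hp] using nhds_basis_closedBall.eventually_iff.1 (hf.hasFDerivAt.isLittleO.def hη)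

lemma IsLyapunovForm.exists_solution_exiting [FiniteDimensional ℝ E] {f : E → E} {p : E} {s : ℝ}
    {B : E →L[ℝ] E →L[ℝ] ℝ} (hB : IsLyapunovForm (fderiv ℝ f p) s B) (hf : ContDiffAt ℝ 1 f p)
    (hp : f p = 0) :
    ∃ r > 0, ∀ ρ ≤ r, ∀ z, ‖z - p‖ ≤ ρ → ∀ T, 0 ≤ T →
      ‖B‖ * ρ ^ 2 < B (z - p) (z - p) * Real.exp (2 * s * T) →
      ∃ (W : ℝ → E) (τ : ℝ), τ ∈ Icc 0 T ∧ W 0 = z ∧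
        (∀ t ∈ Icc 0 τ, HasDerivAt W (f (W t)) t) ∧ ‖W τ - p‖ = ρ := by
  obtain ⟨r₁, hr₁, g, K, M, hK, hM, hgf⟩ := exists_lipschitzWith_bounded_eqOn_closedBall hf
  obtain ⟨r₂, hr₂, hrem⟩ := exists_norm_sub_fderiv_le (hf.differentiableAt one_ne_zero) hp
    (η := 1 / (2 * ‖B‖ + 1)) (by positivity)
  have hη : 2 * ‖B‖ * (1 / (2 * ‖B‖ + 1)) ≤ 1 := by
    rw [mul_one_div, div_le_one (by positivity)]
    linarith
  refine ⟨min r₁ r₂, lt_min hr₁ hr₂, fun ρ hρ z hz T hT hlarge ↦ ?_⟩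
  have : CompleteSpace E := FiniteDimensional.complete ℝ E
  obtain ⟨W, hW0, hW⟩ := exists_forall_hasDerivAt_of_lipschitzWith_of_bounded hK hM z hT
  have hWf : ∀ t ∈ Icc 0 T, ‖W t - p‖ ≤ ρ → HasDerivAt W (f (W t)) t := fun t ht h ↦
    hgf (mem_closedBall_iff_norm.2 (h.trans (hρ.trans (min_le_left _ _)))) ▸ hW t ht
  have hreach : ∃ t ∈ Icc 0 T, ρ ≤ ‖W t - p‖ :=
    hB.exists_le_norm hη hT (fun t ht h ↦ (hWf t ht h).sub_const p)
      (fun t _ h ↦ hrem _ (mem_closedBall_iff_norm.2 (h.trans (hρ.trans (min_le_right _ _)))))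
      (by simpa only [hW0, sub_zero] using hlarge)
  have hcont : ContinuousOn (fun t ↦ ‖W t - p‖) (Icc 0 T) := fun t ht ↦
    ((hW t ht).continuousAt.sub continuousAt_const).norm.continuousWithinAt
  obtain ⟨τ, hτ, hWτ, hbefore⟩ := exists_first_hitting_time hcont (by simpa [hW0]) hreach
  exact ⟨W, τ, hτ, hW0,
    fun t ht ↦ hWf t (Icc_subset_Icc_right hτ.2 ht) (hbefore t ht), hWτ⟩

end Exit

section SmallParameter

lemma exp_mul_abs_log {ε : ℝ} (hε : 0 < ε) (hε' : ε ≤ 1) (c : ℝ) :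
    Real.exp (c * |Real.log ε|) = ε ^ (-c) := by
  rw [abs_of_nonpos (Real.log_nonpos hε.le hε'), Real.rpow_def_of_pos hε]
  ring_nf

lemma eventually_mul_rpow_sq_lt_mul_exp {lam s β k : ℝ} (hlam : 0 < lam) (hs : lam < s)
    (hβ : β < 1) (hk : 0 < k) (C : ℝ) :
    ∀ᶠ ε : ℝ in 𝓝[>] 0,
      C * (ε ^ β) ^ 2 < k * ε ^ 2 * Real.exp (2 * s * ((1 - β) / lam * |Real.log ε|)) := by
  have hq : 2 * (1 - β) * (1 - s / lam) < 0 :=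
    mul_neg_of_pos_of_neg (by linarith) (sub_neg.2 ((one_lt_div hlam).2 hs))
  filter_upwards [(tendsto_rpow_neg_nhdsGT_zero hq).eventually_gt_atTop (C / k),
    self_mem_nhdsWithin, mem_nhdsWithin_of_mem_nhds (Iic_mem_nhds one_pos)] with ε hC hε hε1
  have hε : 0 < ε := hε
  have hpow : ε ^ 2 * Real.exp (2 * s * ((1 - β) / lam * |Real.log ε|)) =
      ε ^ (2 * (1 - β) * (1 - s / lam)) * (ε ^ β) ^ 2 := by
    rw [← mul_assoc, exp_mul_abs_log hε hε1, ← Real.rpow_natCast, ← Real.rpow_natCast,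
      ← Real.rpow_mul hε.le, ← Real.rpow_add hε, ← Real.rpow_add hε]
    push_cast
    ring_nf
  rw [mul_assoc, hpow, ← mul_assoc]
  have hCk : C < k * ε ^ (2 * (1 - β) * (1 - s / lam)) := (div_lt_iff₀' hk).1 hC
  gcongr

lemma eventually_const_mul_rpow_le {β r : ℝ} (hβ : 0 < β) (hr : 0 < r) (C : ℝ) :
    ∀ᶠ ε : ℝ in 𝓝[>] 0, C * ε ^ β ≤ r := by
  have hlim : Tendsto (fun ε : ℝ ↦ C * ε ^ β) (𝓝 0) (𝓝 (C * 0 ^ β)) :=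
    (Real.continuousAt_rpow_const 0 β (.inr hβ.le)).tendsto.const_mul C
  rw [Real.zero_rpow hβ.ne', mul_zero] at hlim
  exact (hlim.mono_left nhdsWithin_le_nhds).eventually_le_const hr

end SmallParameter

theorem unstable_point_fast_exit_general {E : Type*} [NormedAddCommGroup E] [NormedSpace ℝ E]
    [FiniteDimensional ℝ E] {f : E → E} {p : E} (hf : ContDiffAt ℝ 1 f p) (hp : f p = 0) {μ : ℂ}
    (hμ : ((fderiv ℝ f p : E →ₗ[ℝ] E).charpoly.map (algebraMap ℝ ℂ)).IsRoot μ)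
    {lam β : ℝ} (hlam : 0 < lam) (hlamμ : lam < μ.re) (hβ0 : 0 < β) (hβ1 : β < 1) :
    ∃ ε₀ > 0, ∀ ε : ℝ, 0 < ε → ε < ε₀ →
    ∃ (Z₀ : E) (Z : ℝ → E) (T : ℝ),
      ‖Z₀ - p‖ = ε / 2 ∧ Z 0 = Z₀ ∧ 0 ≤ T ∧
      (∀ t ∈ Icc 0 T, HasDerivAt Z (f (Z t)) t) ∧
      2 * ε ^ β < ‖Z T - p‖ ∧
      T ≤ (1 - β) / lam * |Real.log ε| := by
  obtain ⟨x, y, hxy⟩ := exists_isReImEigenvector hμ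
  obtain ⟨s, ⟨hs, hsμ⟩, B, hB⟩ := exists_isLyapunovForm (fderiv ℝ f p) hlamμ
  obtain ⟨v, hv⟩ := hB.exists_pos hsμ hxy
  have hv0 : 0 < ‖v‖ := norm_pos_iff.2 fun h ↦ by simp [h] at hv
  obtain ⟨r, hr, hexit⟩ := hB.exists_solution_exiting hf hp
  obtain ⟨ε₀, hε₀, hsmall⟩ := mem_nhdsGT_iff_exists_Ioo_subset.1
    (((eventually_mul_rpow_sq_lt_mul_exp hlam hs hβ1 (k := B v v / (2 * ‖v‖) ^ 2)
      (by positivity) (‖B‖ * 3 ^ 2)).and (eventually_const_mul_rpow_le hβ0 hr 3)).and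
      (mem_nhdsWithin_of_mem_nhds (Iic_mem_nhds one_pos)))
  refine ⟨ε₀, hε₀, fun ε hε hεε₀ ↦ ?_⟩
  obtain ⟨⟨hlarge, hball⟩, hε1⟩ := hsmall ⟨hε, hεε₀⟩
  have hεβ : ε ≤ ε ^ β := by
    simpa using Real.rpow_le_rpow_of_exponent_ge hε hε1 hβ1.le
  let d : E := (ε / (2 * ‖v‖)) • v
  have hd : ‖d‖ = ε / 2 := by
    rw [norm_smul, Real.norm_of_nonneg (by positivity)]
    field_simp
  have hBd : B d d = B v v / (2 * ‖v‖) ^ 2 * ε ^ 2 := by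
    simp only [d, map_smul, smul_apply, smul_eq_mul]
    ring
  obtain ⟨Z, T, hT, hZ0, hZ, hZT⟩ := hexit (3 * ε ^ β) hball (p + d)
    (by rw [add_sub_cancel_left, hd]; linarith) ((1 - β) / lam * |Real.log ε|)
    (mul_nonneg (div_nonneg (by linarith) hlam.le) (abs_nonneg _))
    (by rw [add_sub_cancel_left, hBd, mul_pow, ← mul_assoc]; exact hlarge)
  exact ⟨p + d, Z, T, by rw [add_sub_cancel_left, hd], hZ0, hT.1, hZ,
    by rw [hZT]; linarith, hT.2⟩

/-- if `f(Z*) = 0` and `Df(Z*)` has an eigenvalue with positive real part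
`λ₀ > 0`, then for every `λ ∈ (0, λ₀)`, `β ∈ (0,1)` and sufficiently small `ε > 0` there is
an initial datum `Z₀` at sup-distance `ε/2` from `Z*` whose solution exits the ball of
radius `2 ε^β` before time `((1-β)/λ)|ln ε|`. Here the norm on `(ℝ²)^N = (Fin N → ℂ)`
is the sup of the Euclidean norms of the components. -/
theorem unstable_point_fast_exit
    (N : ℕ) (hN : 1 ≤ N) (f : (Fin N → ℂ) → (Fin N → ℂ)) (hf : ContDiff ℝ 1 f)
    (Zstar : Fin N → ℂ) (hZstar : f Zstar = 0)
    (lam₀ : ℝ) (hlam₀ : 0 < lam₀)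
    (heig : ∃ μ : ℂ, μ.re = lam₀ ∧ IsJacobianEigenvalue N f Zstar μ) :
    ∀ lam : ℝ, 0 < lam → lam < lam₀ →
    ∀ β : ℝ, 0 < β → β < 1 →
    ∃ ε₀ > 0, ∀ ε : ℝ, 0 < ε → ε < ε₀ →
    ∃ (Z₀ : Fin N → ℂ) (Z : ℝ → Fin N → ℂ) (T : ℝ),
      ‖Z₀ - Zstar‖ = ε / 2 ∧ Z 0 = Z₀ ∧ 0 ≤ T ∧
      (∀ t ∈ Set.Icc 0 T, HasDerivAt Z (f (Z t)) t) ∧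
      2 * ε ^ β < ‖Z T - Zstar‖ ∧
      T ≤ (1 - β) / lam * |Real.log ε| := by
  obtain ⟨μ, rfl, hμ⟩ := heig
  rw [IsJacobianEigenvalue, jacobianMatrix, LinearMap.charpoly_toMatrix] at hμ
  exact fun lam hlam hlt β hβ0 hβ1 ↦
    unstable_point_fast_exit_general hf.contDiffAt hZstar hμ hlam hlt hβ0 hβ1
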